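/- Let K be a relatively congruence distributive quasivariety whose class K_rfsi of relatively finitely subdirectly irreducible members is closed under nontrivial subalgebras. If K has the strong epimorphism surjectivity property, then K is an arithmetical variety with the congruence extension property. -/

import Mathlib

namespace Impl

open FirstOrder Language

universe u v

/-- A bundled algebra (first-order structure) for the language `L`. -/
structure Alg (L : FirstOrder.Language.{u, u}) : Type (u + 1) where
  carrier : Type u
  [str : L.Structure carrier]

attribute [instance] Alg.str

variable {L : FirstOrder.Language.{u, u}}

/-- The direct product of a family of algebras. -/
def Alg.pi {ι : Type u} (A : ι → Alg L) : Alg L where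
  carrier := ∀ i, (A i).carrier
  str :=
    { funMap := fun {k} f v i => Structure.funMap f fun j => v j i
      RelMap := fun {k} r v => ∀ i, Structure.RelMap r fun j => v j i }

/-- The binary direct product of two algebras. -/
def Alg.prod (A B : Alg L) : Alg L where
  carrier := A.carrier × B.carrier
  str :=
    { funMap := fun {k} f v =>
        (Structure.funMap f fun j => (v j).1, Structure.funMap f fun j => (v j).2)
      RelMap := fun {k} r v =>
        Structure.RelMap r (fun j => (v j).1) ∧ Structure.RelMap r fun j => (v j).2 }

/-- The ultraproduct of a family of algebras with respect to an ultrafilter. -/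
def Alg.uprod {ι : Type u} (F : Ultrafilter ι) (A : ι → Alg L) : Alg L where
  carrier := Filter.Product (F : Filter ι) fun i => (A i).carrier
  str := inferInstance

/-- Closure under isomorphic copies. -/
def ClosedUnderIso (K : Set (Alg L)) : Prop :=
  ∀ A B : Alg L, A ∈ K → Nonempty (A.carrier ≃[L] B.carrier) → B ∈ K

/-- Closure under subalgebras (up to the identification of a subalgebra with an embedding). -/
def ClosedUnderSub (K : Set (Alg L)) : Prop :=
  ∀ A B : Alg L, B ∈ K → Nonempty (A.carrier ↪[L] B.carrier) → A ∈ K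

/-- Closure under direct products. -/
def ClosedUnderProd (K : Set (Alg L)) : Prop :=
  ∀ (ι : Type u) (A : ι → Alg L), (∀ i, A i ∈ K) → Alg.pi A ∈ K

/-- Closure under finite direct products. -/
def ClosedUnderFinProd (K : Set (Alg L)) : Prop :=
  ∀ (ι : Type u), Finite ι → ∀ A : ι → Alg L, (∀ i, A i ∈ K) → Alg.pi A ∈ K

/-- Closure under homomorphic images. -/
def ClosedUnderHomImg (K : Set (Alg L)) : Prop :=
  ∀ A B : Alg L, A ∈ K → ∀ h : A.carrier →[L] B.carrier, Function.Surjective h → B ∈ K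

/-- Closure under ultraproducts. -/
def ClosedUnderUprod (K : Set (Alg L)) : Prop :=
  ∀ (ι : Type u) (F : Ultrafilter ι) (A : ι → Alg L), (∀ i, A i ∈ K) → Alg.uprod F A ∈ K

/-- A universal class: a class closed under isomorphic copies, subalgebras and ultraproducts. -/
def IsUniversalClass (K : Set (Alg L)) : Prop :=
  ClosedUnderIso K ∧ ClosedUnderSub K ∧ ClosedUnderUprod K

/-- A quasivariety: a class closed under isomorphic copies, subalgebras, direct products and
ultraproducts. -/
def IsQuasivariety (K : Set (Alg L)) : Prop :=
  ClosedUnderIso K ∧ ClosedUnderSub K ∧ ClosedUnderProd K ∧ ClosedUnderUprod K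

/-- A variety: a class closed under homomorphic images, subalgebras and direct products. -/
def IsVariety (K : Set (Alg L)) : Prop :=
  ClosedUnderHomImg K ∧ ClosedUnderSub K ∧ ClosedUnderProd K

/-- The least quasivariety containing `K`. -/
def QGen (K : Set (Alg L)) : Set (Alg L) :=
  ⋂₀ { M : Set (Alg L) | IsQuasivariety M ∧ K ⊆ M }

/-- The least variety containing `K`. -/
def VGen (K : Set (Alg L)) : Set (Alg L) :=
  ⋂₀ { M : Set (Alg L) | IsVariety M ∧ K ⊆ M }

/-- An elementary class: the class of all models of some first-order theory. -/
def IsElementary (K : Set (Alg L)) : Prop :=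
  ∃ T : L.Theory, ∀ A : Alg L, A ∈ K ↔ ∀ φ ∈ T, A.carrier ⊨ φ

/-- Finite conjunctions of equations (with `⊤` as the empty conjunction). -/
inductive IsConjEq {α : Type v} : ∀ {k : ℕ}, L.BoundedFormula α k → Prop
  | top {k} : IsConjEq (⊤ : L.BoundedFormula α k)
  | equal {k} (t₁ t₂ : L.Term (α ⊕ Fin k)) : IsConjEq (BoundedFormula.equal t₁ t₂)
  | inf {k} {φ ψ : L.BoundedFormula α k} : IsConjEq φ → IsConjEq ψ → IsConjEq (φ ⊓ ψ)

/-- Positive quantifier-free formulas: built from equations, `⊤` and `⊥` using `⊓` and `⊔`. -/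
inductive IsPosQF {α : Type v} : ∀ {k : ℕ}, L.BoundedFormula α k → Prop
  | falsum {k} : IsPosQF (⊥ : L.BoundedFormula α k)
  | top {k} : IsPosQF (⊤ : L.BoundedFormula α k)
  | equal {k} (t₁ t₂ : L.Term (α ⊕ Fin k)) : IsPosQF (BoundedFormula.equal t₁ t₂)
  | inf {k} {φ ψ : L.BoundedFormula α k} : IsPosQF φ → IsPosQF ψ → IsPosQF (φ ⊓ ψ)
  | sup {k} {φ ψ : L.BoundedFormula α k} : IsPosQF φ → IsPosQF ψ → IsPosQF (φ ⊔ ψ)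

/-- Primitive positive (pp) formulas: existentially quantified finite conjunctions of
equations. -/
inductive IsPP {α : Type v} : ∀ {k : ℕ}, L.BoundedFormula α k → Prop
  | of_conjEq {k} {φ : L.BoundedFormula α k} : IsConjEq φ → IsPP φ
  | ex {k} {φ : L.BoundedFormula α (k + 1)} : IsPP φ → IsPP φ.ex

/-- Existential positive formulas: existentially quantified positive quantifier-free
formulas. -/
inductive IsExistPos {α : Type v} : ∀ {k : ℕ}, L.BoundedFormula α k → Prop
  | of_posQF {k} {φ : L.BoundedFormula α k} : IsPosQF φ → IsExistPos φ
  | ex {k} {φ : L.BoundedFormula α (k + 1)} : IsExistPos φ → IsExistPos φ.ex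

/-- Two formulas are equivalent in a class of algebras. -/
def EquivOn (K : Set (Alg L)) {α : Type v} (φ ψ : L.Formula α) : Prop :=
  ∀ A : Alg L, A ∈ K → ∀ x : α → A.carrier, φ.Realize x ↔ ψ.Realize x

/-- A formula is preserved by homomorphisms in `K`. -/
def PreservedByHomsOn (K : Set (Alg L)) {α : Type v} (φ : L.Formula α) : Prop :=
  ∀ A B : Alg L, A ∈ K → B ∈ K → ∀ (h : A.carrier →[L] B.carrier) (x : α → A.carrier),
    φ.Realize x → φ.Realize fun a => h (x a)

/-- A formula is preserved by direct products in `K`. -/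
def PreservedByProdsOn (K : Set (Alg L)) {α : Type v} (φ : L.Formula α) : Prop :=
  ∀ (ι : Type u) (A : ι → Alg L), (∀ i, A i ∈ K) → ∀ x : α → (Alg.pi A).carrier,
    (∀ i, φ.Realize fun a => x a i) → φ.Realize x

/-- An `n`-ary partial function on a class of algebras `K`: a family assigning to each member of
`K` an `n`-ary partial function on its carrier. -/
def PartialFunOn (K : Set (Alg L)) (n : ℕ) :=
  ∀ (A : Alg L), A ∈ K → ((Fin n → A.carrier) →. A.carrier)

/-- A partial function on `K` is defined by the formula `φ(x₁, …, xₙ, y)` (the last variable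
being the output) when its graph on each member of `K` is the solution set of `φ`. -/
def DefinedBy {K : Set (Alg L)} {n : ℕ} (f : PartialFunOn K n)
    (φ : L.Formula (Fin (n + 1))) : Prop :=
  ∀ (A : Alg L) (hA : A ∈ K) (x : Fin n → A.carrier) (b : A.carrier),
    b ∈ f A hA x ↔ φ.Realize (Fin.snoc x b)

/-- The formula `φ(x₁, …, xₙ, y)` is functional in `K`: for all inputs there is at most one
output satisfying it. -/
def FunctionalIn (K : Set (Alg L)) {n : ℕ} (φ : L.Formula (Fin (n + 1))) : Prop :=
  ∀ A : Alg L, A ∈ K → ∀ (x : Fin n → A.carrier) (b₁ b₂ : A.carrier),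
    φ.Realize (Fin.snoc x b₁) → φ.Realize (Fin.snoc x b₂) → b₁ = b₂

/-- A partial function on `K` is an operation of `K` when it is preserved by all homomorphisms
between members of `K`. -/
def IsOperationOn {K : Set (Alg L)} {n : ℕ} (f : PartialFunOn K n) : Prop :=
  ∀ (A B : Alg L) (hA : A ∈ K) (hB : B ∈ K) (h : A.carrier →[L] B.carrier)
    (x : Fin n → A.carrier) (b : A.carrier),
    b ∈ f A hA x → h b ∈ f B hB fun i => h (x i)

/-- A partial function on `K` is implicit when it is defined by some formula. -/
def IsImplicit {K : Set (Alg L)} {n : ℕ} (f : PartialFunOn K n) : Prop :=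
  ∃ φ : L.Formula (Fin (n + 1)), DefinedBy f φ

/-- An implicit operation of `K`: a partial function that is both implicit and an operation. -/
def IsImplicitOp {K : Set (Alg L)} {n : ℕ} (f : PartialFunOn K n) : Prop :=
  IsImplicit f ∧ IsOperationOn f

/-- An implicit operation is extendable when every tuple in every member of `K` lies in the
domain of the operation in some extension inside `K`. -/
def Extendable {K : Set (Alg L)} {n : ℕ} (f : PartialFunOn K n) : Prop :=
  ∀ (A : Alg L) (hA : A ∈ K) (x : Fin n → A.carrier),
    ∃ (B : Alg L) (hB : B ∈ K) (e : A.carrier ↪[L] B.carrier),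
      (f B hB fun i => e (x i)).Dom

/-- The dominion of a subset `s` of `M` relative to the class `K`. -/
def dominion (K : Set (Alg L)) (M : Type u) [L.Structure M] (s : Set M) : Set M :=
  { b | ∀ C : Alg L, C ∈ K → ∀ g h : M →[L] C.carrier, (∀ a ∈ s, g a = h a) → g b = h b }

/-- The strong epimorphism surjectivity property. -/
def StrongES (K : Set (Alg L)) : Prop :=
  ∀ (A B : Alg L), A ∈ K → B ∈ K → ∀ (f : A.carrier →[L] B.carrier) (b : B.carrier),
    b ∉ Set.range f →
      ∃ C : Alg L, C ∈ K ∧ ∃ g h : B.carrier →[L] C.carrier,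
        (∀ a : A.carrier, g (f a) = h (f a)) ∧ g b ≠ h b

/-- The weak epimorphism surjectivity property: every `K`-epimorphism between finitely
generated members of `K` is surjective. -/
def WeakES (K : Set (Alg L)) : Prop :=
  ∀ (A B : Alg L), A ∈ K → B ∈ K →
    Structure.FG L A.carrier → Structure.FG L B.carrier →
      ∀ f : A.carrier →[L] B.carrier,
        (∀ C : Alg L, C ∈ K → ∀ g h : B.carrier →[L] C.carrier,
          (∀ a : A.carrier, g (f a) = h (f a)) → g = h) →
        Function.Surjective f

/-- The amalgamation property. -/
def HasAmalgamation (K : Set (Alg L)) : Prop :=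
  ∀ (A B C : Alg L), A ∈ K → B ∈ K → C ∈ K →
    ∀ (f : A.carrier ↪[L] B.carrier) (g : A.carrier ↪[L] C.carrier),
      ∃ D : Alg L, D ∈ K ∧ ∃ (f' : B.carrier ↪[L] D.carrier) (g' : C.carrier ↪[L] D.carrier),
        ∀ a : A.carrier, f' (f a) = g' (g a)

/-- A finitely presented member of `K`: an algebra in `K` with a finite presentation, phrased
through the usual universal property of `T(X)/Cg_K(Y)`. -/
def FinitelyPresentedIn (K : Set (Alg L)) (B : Alg L) : Prop :=
  B ∈ K ∧ ∃ (m : ℕ) (Y : Finset (L.Term (Fin m) × L.Term (Fin m))) (b : Fin m → B.carrier),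
    Substructure.closure L (Set.range b) = ⊤ ∧
    (∀ p ∈ Y, p.1.realize b = p.2.realize b) ∧
    ∀ C : Alg L, C ∈ K → ∀ x : Fin m → C.carrier,
      (∀ p ∈ Y, p.1.realize x = p.2.realize x) →
        ∃ g : B.carrier →[L] C.carrier, ∀ i, g (b i) = x i

/-- Subdirectly irreducible relative to `K`. -/
def IsRSI (K : Set (Alg L)) (A : Alg L) : Prop :=
  A ∈ K ∧ ∀ (ι : Type u) (B : ι → Alg L), (∀ i, B i ∈ K) →
    ∀ h : A.carrier ↪[L] (Alg.pi B).carrier,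
      (∀ i, Function.Surjective fun a => h a i) →
        ∃ i, Function.Bijective fun a => h a i

/-- Finitely subdirectly irreducible relative to `K`. -/
def IsRFSI (K : Set (Alg L)) (A : Alg L) : Prop :=
  A ∈ K ∧ ∀ (ι : Type u), Finite ι → ∀ B : ι → Alg L, (∀ i, B i ∈ K) →
    ∀ h : A.carrier ↪[L] (Alg.pi B).carrier,
      (∀ i, Function.Surjective fun a => h a i) →
        ∃ i, Function.Bijective fun a => h a i

/-- A congruence on an algebra: an equivalence relation compatible with all the operations. -/
def IsCongruenceOn (A : Alg L) (θ : A.carrier → A.carrier → Prop) : Prop :=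
  Equivalence θ ∧
    ∀ (k : ℕ) (f : L.Functions k) (x y : Fin k → A.carrier),
      (∀ i, θ (x i) (y i)) → θ (Structure.funMap f x) (Structure.funMap f y)

/-- The quotient of an algebra by (the setoid of) an equivalence relation; when the relation is
a congruence this is the quotient algebra. -/
noncomputable def Alg.quot (A : Alg L) (θ : A.carrier → A.carrier → Prop) (h : Equivalence θ) :
    Alg L where
  carrier := Quotient (⟨θ, h⟩ : Setoid A.carrier)
  str :=
    { funMap := fun {k} f v => Quotient.mk _ (Structure.funMap f fun i => (v i).out)
      RelMap := fun {k} r v => Structure.RelMap r fun i => (v i).out }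

/-- A `K`-congruence of `A`: a congruence whose quotient lies in `K`. -/
def IsRelCong (K : Set (Alg L)) (A : Alg L) (θ : A.carrier → A.carrier → Prop) : Prop :=
  ∃ h : IsCongruenceOn A θ, Alg.quot A θ h.1 ∈ K

/-- The join of two relations in the lattice of `K`-congruences of `A`. -/
def relCongJoin (K : Set (Alg L)) (A : Alg L)
    (θ φ : A.carrier → A.carrier → Prop) (x y : A.carrier) : Prop :=
  ∀ ρ : A.carrier → A.carrier → Prop, IsRelCong K A ρ →
    (∀ a b, θ a b → ρ a b) → (∀ a b, φ a b → ρ a b) → ρ x y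

/-- Relative congruence distributivity: the lattice of `K`-congruences of each member of `K`
is distributive. -/
def RelCongDistributive (K : Set (Alg L)) : Prop :=
  ∀ A : Alg L, A ∈ K → ∀ θ φ ψ : A.carrier → A.carrier → Prop,
    IsRelCong K A θ → IsRelCong K A φ → IsRelCong K A ψ →
      ∀ x y : A.carrier,
        (θ x y ∧ relCongJoin K A φ ψ x y) ↔
          relCongJoin K A (fun a b => θ a b ∧ φ a b) (fun a b => θ a b ∧ ψ a b) x y

/-- The join of two relations in the lattice of congruences of `A`. -/
def congJoin (A : Alg L) (θ φ : A.carrier → A.carrier → Prop) (x y : A.carrier) : Prop :=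
  ∀ ρ : A.carrier → A.carrier → Prop, IsCongruenceOn A ρ →
    (∀ a b, θ a b → ρ a b) → (∀ a b, φ a b → ρ a b) → ρ x y

/-- Congruence permutability for all members of a class. -/
def CongPermutableClass (K : Set (Alg L)) : Prop :=
  ∀ A : Alg L, A ∈ K → ∀ θ φ : A.carrier → A.carrier → Prop,
    IsCongruenceOn A θ → IsCongruenceOn A φ →
      ∀ x y : A.carrier, (∃ z, θ x z ∧ φ z y) ↔ ∃ z, φ x z ∧ θ z y

/-- Congruence distributivity for all members of a class. -/
def CongDistributiveClass (K : Set (Alg L)) : Prop :=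
  ∀ A : Alg L, A ∈ K → ∀ θ φ ψ : A.carrier → A.carrier → Prop,
    IsCongruenceOn A θ → IsCongruenceOn A φ → IsCongruenceOn A ψ →
      ∀ x y : A.carrier,
        (θ x y ∧ congJoin A φ ψ x y) ↔
          congJoin A (fun a b => θ a b ∧ φ a b) (fun a b => θ a b ∧ ψ a b) x y

/-- The congruence extension property. -/
def HasCEP (K : Set (Alg L)) : Prop :=
  ∀ A B : Alg L, A ∈ K → B ∈ K → ∀ e : A.carrier ↪[L] B.carrier,
    ∀ θ : A.carrier → A.carrier → Prop, IsCongruenceOn A θ →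
      ∃ ρ : B.carrier → B.carrier → Prop, IsCongruenceOn B ρ ∧
        ∀ x y : A.carrier, θ x y ↔ ρ (e x) (e y)

/-- The language consisting of one new function symbol `gᵢ` of arity `ar i` for each `i`. -/
def newLang {ι : Type u} (ar : ι → ℕ) : FirstOrder.Language.{u, u} where
  Functions := fun n => { i : ι // ar i = n }
  Relations := fun _ => PEmpty

/-- The `L`-reduct of an algebra in an expanded language `L.sum N`. -/
def algReduct {N : FirstOrder.Language.{u, u}} (B : Alg (L.sum N)) : Alg L where
  carrier := B.carrier
  str := (LHom.sumInl : L →ᴸ L.sum N).reduct B.carrier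

/-- The class `K[L_F]` of expansions of members of `K` on which each operation in the family
`f` is total, interpreting the new symbol `gᵢ` as `f i`. -/
def expClass (K : Set (Alg L)) {ι : Type u} (ar : ι → ℕ)
    (f : ∀ i, PartialFunOn K (ar i)) : Set (Alg (L.sum (newLang ar))) :=
  { B | ∃ hB : algReduct B ∈ K,
      ∀ (i : ι) (x : Fin (ar i) → B.carrier),
        Structure.funMap (L := L.sum (newLang ar)) (M := B.carrier)
            (Sum.inr ⟨i, rfl⟩ : (L.sum (newLang ar)).Functions (ar i)) x
          ∈ f i (algReduct B) hB x }

/-- Closure under subalgebras (and isomorphic copies) inside a fixed language. -/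
def SClosure {L' : FirstOrder.Language.{u, u}} (S : Set (Alg L')) : Set (Alg L') :=
  { A | ∃ B ∈ S, Nonempty (A.carrier ↪[L'] B.carrier) }

/-- Membership in `ext_pp(K)`: an extendable implicit operation defined by a pp formula. -/
def InExtPP {K : Set (Alg L)} {n : ℕ} (f : PartialFunOn K n) : Prop :=
  IsOperationOn f ∧ (∃ φ : L.Formula (Fin (n + 1)), IsPP φ ∧ DefinedBy f φ) ∧ Extendable f

/-- `M` is the pp expansion of `K` induced by the family `f` of extendable pp-definable
implicit operations, with one new symbol of arity `ar i` for each `i`. -/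
def IsPPExpansionVia (K : Set (Alg L)) {ι : Type u} (ar : ι → ℕ)
    (f : ∀ i, PartialFunOn K (ar i)) (M : Set (Alg (L.sum (newLang ar)))) : Prop :=
  (∀ i, 0 < ar i) ∧ (∀ i, InExtPP (f i)) ∧ M = SClosure (expClass K ar f)

/-- Every implicit operation of `K` is interpolated in `M` by a set of terms of the expanded
language. -/
def InterpolatesByTermsInExp (K : Set (Alg L)) {ι : Type u} {ar : ι → ℕ}
    (M : Set (Alg (L.sum (newLang ar)))) : Prop :=
  ∀ n : ℕ, 0 < n → ∀ g : PartialFunOn K n, IsImplicitOp g →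
    ∃ T : Set ((L.sum (newLang ar)).Term (Fin n)),
      ∀ A : Alg (L.sum (newLang ar)), A ∈ M →
        ∀ (hA : algReduct A ∈ K) (x : Fin n → A.carrier) (b : A.carrier),
          b ∈ g (algReduct A) hA x → ∃ t ∈ T, t.realize x = b

/-- `M` is a Beth companion of `K` (via the given expansion datum). -/
def IsBethCompanionVia (K : Set (Alg L)) {ι : Type u} (ar : ι → ℕ)
    (f : ∀ i, PartialFunOn K (ar i)) (M : Set (Alg (L.sum (newLang ar)))) : Prop :=
  IsPPExpansionVia K ar f M ∧ InterpolatesByTermsInExp K M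

/-- A pp expansion is congruence preserving when the `M`-congruences of each member of `M`
coincide with the `K`-congruences of its `L`-reduct. -/
def CongPreserving {N : FirstOrder.Language.{u, u}} (K : Set (Alg L))
    (M : Set (Alg (L.sum N))) : Prop :=
  ∀ A : Alg (L.sum N), A ∈ M → ∀ θ : A.carrier → A.carrier → Prop,
    IsRelCong M A θ ↔ IsRelCong K (algReduct A) θ

/-- Reinterpretation of an `L₁`-algebra as an `L₂`-algebra along a map sending `L₂`-symbols to
`L₁`-terms (both languages are assumed to be purely functional). -/
def reinterpret {L₁ L₂ : FirstOrder.Language.{u, u}} (ρ : ∀ n, L₂.Functions n → L₁.Term (Fin n))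
    (A : Alg L₁) : Alg L₂ where
  carrier := A.carrier
  str :=
    { funMap := fun {k} s x => (ρ k s).realize x
      RelMap := fun {k} _ _ => False }

/-- Two expansions of the same base language `L` are faithfully term equivalent relative to
`L`. -/
def FaithfullyTermEquivRel (L : FirstOrder.Language.{u, u}) {N₁ N₂ : FirstOrder.Language.{u, u}}
    (M₁ : Set (Alg (L.sum N₁))) (M₂ : Set (Alg (L.sum N₂))) : Prop :=
  ∃ (τ : ∀ n, (L.sum N₁).Functions n → (L.sum N₂).Term (Fin n))
    (ρ : ∀ n, (L.sum N₂).Functions n → (L.sum N₁).Term (Fin n)),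
    (∀ (n : ℕ) (s : L.Functions n),
      τ n (Sum.inl s) = Term.func (Sum.inl s : (L.sum N₂).Functions n) Term.var) ∧
    (∀ (n : ℕ) (s : L.Functions n),
      ρ n (Sum.inl s) = Term.func (Sum.inl s : (L.sum N₁).Functions n) Term.var) ∧
    (∀ A : Alg (L.sum N₁), A ∈ M₁ → reinterpret ρ A ∈ M₂) ∧
    (∀ B : Alg (L.sum N₂), B ∈ M₂ → reinterpret τ B ∈ M₁) ∧
    (∀ A : Alg (L.sum N₁), A ∈ M₁ → reinterpret τ (reinterpret ρ A) = A) ∧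
    (∀ B : Alg (L.sum N₂), B ∈ M₂ → reinterpret ρ (reinterpret τ B) = B)

section Aux

/-- Homomorphisms of algebras from maps preserving the operations. -/
def mkHom [L.IsAlgebraic] {M N : Type u} [L.Structure M] [L.Structure N] (f : M → N)
    (hf : ∀ (n : ℕ) (s : L.Functions n) (x : Fin n → M),
      f (Structure.funMap s x) = Structure.funMap s (fun i => f (x i))) : M →[L] N where
  toFun := f
  map_fun' := fun {n} s x => hf n s x
  map_rel' := fun {_} r _ => isEmptyElim r

theorem mkHom_apply [L.IsAlgebraic] {M N : Type u} [L.Structure M] [L.Structure N] (f : M → N)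
    (hf : ∀ (n : ℕ) (s : L.Functions n) (x : Fin n → M),
      f (Structure.funMap s x) = Structure.funMap s (fun i => f (x i))) (x : M) :
    mkHom (L := L) f hf x = f x := rfl

theorem hom_funMap {M N : Type u} [L.Structure M] [L.Structure N] (f : M →[L] N)
    {n : ℕ} (s : L.Functions n) (x : Fin n → M) :
    f (Structure.funMap s x) = Structure.funMap s (fun i => f (x i)) := f.map_fun s x

def embOfInj [L.IsAlgebraic] {M N : Type u} [L.Structure M] [L.Structure N] (f : M →[L] N)
    (hf : Function.Injective f) : M ↪[L] N where
  toFun := f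
  inj' := hf
  map_fun' := fun {_} s x => f.map_fun s x
  map_rel' := fun {_} r _ => isEmptyElim r

theorem mem_of_inj [L.IsAlgebraic] {K : Set (Alg L)} (hS : ClosedUnderSub K) {A B : Alg L}
    (hB : B ∈ K) (f : A.carrier →[L] B.carrier) (hf : Function.Injective f) : A ∈ K :=
  hS A B hB ⟨embOfInj f hf⟩

/-- Factoring a homomorphism through a surjective one. -/
theorem exists_lift [L.IsAlgebraic] {M N P : Type u} [L.Structure M] [L.Structure N]
    [L.Structure P] (h : M →[L] N) (hs : Function.Surjective h) (k : M →[L] P)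
    (hk : ∀ x y, h x = h y → k x = k y) : ∃ m : N →[L] P, ∀ x, m (h x) = k x := by
  have key : ∀ x, k (Function.surjInv hs (h x)) = k x :=
    fun x => hk _ _ (Function.surjInv_eq hs _)
  refine ⟨mkHom (fun y => k (Function.surjInv hs y)) ?_, key⟩
  intro n s x
  have h1 : Structure.funMap s x = h (Structure.funMap s (fun i => Function.surjInv hs (x i))) := by
    rw [hom_funMap]
    congr 1
    funext i
    exact (Function.surjInv_eq hs _).symm
  rw [h1, key, hom_funMap]

theorem quot_funMap {A : Alg L} {θ : A.carrier → A.carrier → Prop} (h : IsCongruenceOn A θ)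
    {n : ℕ} (s : L.Functions n) (x : Fin n → A.carrier) :
    Structure.funMap (M := (Alg.quot A θ h.1).carrier) s
      (fun i => (Quotient.mk (⟨θ, h.1⟩ : Setoid A.carrier) (x i))) =
      Quotient.mk (⟨θ, h.1⟩ : Setoid A.carrier) (Structure.funMap s x) := by
  apply Quotient.sound
  apply h.2
  intro i
  exact Quotient.mk_out (s := (⟨θ, h.1⟩ : Setoid A.carrier)) (x i)

/-- The quotient homomorphism. -/
noncomputable def quotHom [L.IsAlgebraic] (A : Alg L) (θ : A.carrier → A.carrier → Prop)
    (h : IsCongruenceOn A θ) : A.carrier →[L] (Alg.quot A θ h.1).carrier :=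
  mkHom (fun x => Quotient.mk (⟨θ, h.1⟩ : Setoid A.carrier) x)
    (fun _ s x => (quot_funMap h s x).symm)

theorem quotHom_eq [L.IsAlgebraic] {A : Alg L} {θ : A.carrier → A.carrier → Prop}
    (h : IsCongruenceOn A θ) (x y : A.carrier) :
    quotHom A θ h x = quotHom A θ h y ↔ θ x y :=
  Quotient.eq (r := (⟨θ, h.1⟩ : Setoid A.carrier))

theorem quotHom_surj [L.IsAlgebraic] {A : Alg L} {θ : A.carrier → A.carrier → Prop}
    (h : IsCongruenceOn A θ) : Function.Surjective (quotHom A θ h) :=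
  fun y => Quotient.exists_rep y

theorem ker_cong {A B : Alg L} (f : A.carrier →[L] B.carrier) :
    IsCongruenceOn A (fun x y => f x = f y) := by
  refine ⟨⟨fun _ => rfl, fun h => h.symm, fun h k => h.trans k⟩, ?_⟩
  intro k s x y hxy
  show f _ = f _
  rw [hom_funMap, hom_funMap]
  congr 1
  funext i
  exact hxy i

theorem relCong_iff [L.IsAlgebraic] {K : Set (Alg L)} (hS : ClosedUnderSub K) {A : Alg L}
    {θ : A.carrier → A.carrier → Prop} :
    IsRelCong K A θ ↔ ∃ B : Alg L, B ∈ K ∧ ∃ f : A.carrier →[L] B.carrier,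
      ∀ x y, θ x y ↔ f x = f y := by
  constructor
  · rintro ⟨h, hq⟩
    exact ⟨_, hq, quotHom A θ h, fun x y => (quotHom_eq h x y).symm⟩
  · rintro ⟨B, hB, f, hf⟩
    obtain rfl : θ = fun x y => f x = f y := by
      funext x y
      exact propext (hf x y)
    refine ⟨ker_cong f, ?_⟩
    obtain ⟨m, hm⟩ := exists_lift (quotHom A _ (ker_cong f)) (quotHom_surj _) f
      (fun x y h => (quotHom_eq (ker_cong f) x y).1 h)
    refine mem_of_inj hS hB m ?_
    intro x y hxy
    obtain ⟨x, rfl⟩ := quotHom_surj (ker_cong f) x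
    obtain ⟨y, rfl⟩ := quotHom_surj (ker_cong f) y
    rw [hm, hm] at hxy
    exact (quotHom_eq (ker_cong f) x y).2 hxy

theorem relCong_ker [L.IsAlgebraic] {K : Set (Alg L)} (hS : ClosedUnderSub K) {A B : Alg L}
    (hB : B ∈ K) (f : A.carrier →[L] B.carrier) : IsRelCong K A (fun x y => f x = f y) :=
  (relCong_iff hS).2 ⟨B, hB, f, fun _ _ => Iff.rfl⟩

theorem relCong_iInter [L.IsAlgebraic] {K : Set (Alg L)} (hS : ClosedUnderSub K)
    (hP : ClosedUnderProd K) {A : Alg L} {ι : Type u}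
    (ρ : ι → A.carrier → A.carrier → Prop) (hρ : ∀ i, IsRelCong K A (ρ i)) :
    IsRelCong K A (fun x y => ∀ i, ρ i x y) := by
  choose B hB f hf using fun i => (relCong_iff hS).1 (hρ i)
  refine (relCong_iff hS).2 ⟨Alg.pi B, hP ι B hB,
    mkHom (N := (Alg.pi B).carrier) (fun x i => f i x) ?_, ?_⟩
  · intro n s x
    funext i
    exact hom_funMap (f i) s x
  · intro x y
    refine ⟨fun h => funext fun i => (hf i x y).1 (h i), fun h i => (hf i x y).2 ?_⟩
    exact congrFun h i

theorem relCong_and [L.IsAlgebraic] {K : Set (Alg L)} (hS : ClosedUnderSub K)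
    (hP : ClosedUnderProd K) {A : Alg L} {θ φ : A.carrier → A.carrier → Prop}
    (hθ : IsRelCong K A θ) (hφ : IsRelCong K A φ) :
    IsRelCong K A (fun x y => θ x y ∧ φ x y) := by
  have := relCong_iInter hS hP (ι := ULift.{u} Bool) (fun i => if i.down then θ else φ)
    (by rintro ⟨_ | _⟩ <;> simpa)
  convert this using 3 with x y
  constructor
  · rintro ⟨h1, h2⟩ ⟨_ | _⟩ <;> simpa
  · intro h
    exact ⟨by simpa using h ⟨true⟩, by simpa using h ⟨false⟩⟩

theorem relCong_join [L.IsAlgebraic] {K : Set (Alg L)} (hS : ClosedUnderSub K)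
    (hP : ClosedUnderProd K) {A : Alg L} (θ φ : A.carrier → A.carrier → Prop) :
    IsRelCong K A (relCongJoin K A θ φ) := by
  have := relCong_iInter hS hP
    (ι := { ρ : A.carrier → A.carrier → Prop // IsRelCong K A ρ ∧
      (∀ a b, θ a b → ρ a b) ∧ (∀ a b, φ a b → ρ a b) }) (fun i => i.1) (fun i => i.2.1)
  convert this using 3 with x y
  constructor
  · intro h i
    exact h i.1 i.2.1 i.2.2.1 i.2.2.2
  · intro h ρ h1 h2 h3
    exact h ⟨ρ, h1, h2, h3⟩

theorem prod_mem [L.IsAlgebraic] {K : Set (Alg L)} (hS : ClosedUnderSub K)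
    (hP : ClosedUnderProd K) {A B : Alg L} (hA : A ∈ K) (hB : B ∈ K) : Alg.prod A B ∈ K := by
  have h := hP (ULift.{u} Bool) (fun i => Bool.rec A B i.down) (by rintro ⟨_ | _⟩ <;> assumption)
  refine mem_of_inj hS h (mkHom (M := (Alg.prod A B).carrier)
    (fun p i => match i with
      | ⟨false⟩ => p.1
      | ⟨true⟩ => p.2) ?_) ?_
  · intro n s x
    funext i
    rcases i with ⟨_ | _⟩ <;> rfl
  · intro p q hpq
    exact Prod.ext (congrFun hpq ⟨false⟩) (congrFun hpq ⟨true⟩)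

def fstHom [L.IsAlgebraic] (A B : Alg L) : (Alg.prod A B).carrier →[L] A.carrier :=
  mkHom (M := (Alg.prod A B).carrier) (fun p => p.1) (fun _ _ _ => rfl)

def sndHom [L.IsAlgebraic] (A B : Alg L) : (Alg.prod A B).carrier →[L] B.carrier :=
  mkHom (M := (Alg.prod A B).carrier) (fun p => p.2) (fun _ _ _ => rfl)

def pairHom [L.IsAlgebraic] {A X Y : Alg L} (p : A.carrier →[L] X.carrier)
    (q : A.carrier →[L] Y.carrier) : A.carrier →[L] (Alg.prod X Y).carrier :=
  mkHom (N := (Alg.prod X Y).carrier) (fun a => (p a, q a)) (fun _ s x =>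
    Prod.ext (hom_funMap p s x) (hom_funMap q s x))

/-- Unions of chains of relative congruences are relative congruences. -/
theorem relCong_chain [L.IsAlgebraic] {K : Set (Alg L)} (hS : ClosedUnderSub K)
    (hU : ClosedUnderUprod K) {A : Alg L} (c : Set (A.carrier → A.carrier → Prop))
    (hc : IsChain (· ≤ ·) c) (hne : c.Nonempty) (hcK : ∀ ρ ∈ c, IsRelCong K A ρ) :
    IsRelCong K A (fun x y => ∃ ρ ∈ c, ρ x y) := by
  choose B hB f hf using fun i : c => (relCong_iff hS).1 (hcK i.1 i.2)
  haveI : Nonempty c := hne.to_subtype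
  haveI : IsDirected c (· ≤ ·) := ⟨fun a b => by
    rcases hc.total a.2 b.2 with h | h
    · exact ⟨b, h, le_refl b⟩
    · exact ⟨a, le_refl a, h⟩⟩
  let F : Ultrafilter c := Ultrafilter.of Filter.atTop
  have hF : (F : Filter c) ≤ Filter.atTop := Ultrafilter.of_le _
  refine (relCong_iff hS).2 ⟨Alg.uprod F B, hU c F B hB,
    mkHom (N := (Alg.uprod F B).carrier)
      (fun x => ((fun i => f i x : ∀ i, (B i).carrier) :
        Filter.Product (F : Filter c) fun i => (B i).carrier)) ?_, ?_⟩
  · intro n s x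
    refine Eq.trans ?_ (Ultraproduct.funMap_cast (M := fun i => (B i).carrier) (u := F) s
      (fun j i => f i (x j))).symm
    congr 1
    funext i
    exact hom_funMap (f i) s x
  · intro x y
    refine Iff.trans (b := ∀ᶠ i in (F : Filter c), f i x = f i y) ?_
      (Quotient.eq (r := (F : Filter c).productSetoid fun i => (B i).carrier)).symm
    constructor
    · rintro ⟨ρ, hρ, hxy⟩
      apply hF
      refine Filter.mem_of_superset (Filter.mem_atTop (⟨ρ, hρ⟩ : c)) ?_
      intro i hi
      exact (hf i x y).1 (hi x y hxy)
    · intro h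
      obtain ⟨i, hi⟩ := h.exists
      exact ⟨i.1, i.2, (hf i x y).2 hi⟩

/-- Points are separated by homomorphisms into relatively finitely subdirectly irreducible
algebras. -/
theorem exists_rfsi [L.IsAlgebraic] {K : Set (Alg L)} (hK : IsQuasivariety K) {D : Alg L}
    (hD : D ∈ K) {x y : D.carrier} (hxy : x ≠ y) :
    ∃ C : Alg L, IsRFSI K C ∧ ∃ q : D.carrier →[L] C.carrier, q x ≠ q y := by
  obtain ⟨-, hS, hP, hU⟩ := hK
  let S : Set (D.carrier → D.carrier → Prop) := { ρ | IsRelCong K D ρ ∧ ¬ ρ x y }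
  have h0 : (fun a b : D.carrier => a = b) ∈ S :=
    ⟨relCong_ker hS hD (Hom.id L D.carrier), hxy⟩
  obtain ⟨κ, -, hκ⟩ := zorn_le_nonempty₀ S (by
    intro c hcS hc ρ₀ hρ₀
    refine ⟨fun a b => ∃ ρ ∈ c, ρ a b, ⟨relCong_chain hS hU c hc ⟨ρ₀, hρ₀⟩
      (fun ρ h => (hcS h).1), ?_⟩, ?_⟩
    · rintro ⟨ρ, h1, h2⟩
      exact (hcS h1).2 h2
    · intro ρ hρ a b hab
      exact ⟨ρ, hρ, hab⟩) _ h0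
  obtain ⟨⟨hcong, hmem⟩, hnxy⟩ := hκ.prop
  refine ⟨_, ⟨hmem, ?_⟩, quotHom D κ hcong, fun h => hnxy ((quotHom_eq hcong x y).1 h)⟩
  intro ι _ B hB h hsurj
  have hne : h (quotHom D κ hcong x) ≠ h (quotHom D κ hcong y) := fun e =>
    hnxy ((quotHom_eq hcong x y).1 (h.injective e))
  obtain ⟨i, hi⟩ := Function.ne_iff.1 hne
  refine ⟨i, ?_, hsurj i⟩
  let g : D.carrier →[L] (B i).carrier := mkHom (fun d => h (quotHom D κ hcong d) i) (by
    intro n s v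
    rw [hom_funMap, h.map_fun]
    rfl)
  have hg : (fun a b => g a = g b) ∈ S := ⟨relCong_ker hS (hB i) g, hi⟩
  have hle : κ ≤ fun a b => g a = g b := by
    intro a b hab
    show h _ i = h _ i
    rw [(quotHom_eq hcong a b).2 hab]
  intro a b hab
  obtain ⟨a, rfl⟩ := quotHom_surj hcong a
  obtain ⟨b, rfl⟩ := quotHom_surj hcong b
  exact (quotHom_eq hcong a b).2 (hκ.le_of_ge hg hle a b hab)

/-- Kernels of homomorphisms into relatively finitely subdirectly irreducible algebras are
meet prime. -/
theorem prime_ker [L.IsAlgebraic] {K : Set (Alg L)} (hK : IsQuasivariety K)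
    (hRCD : RelCongDistributive K)
    (hsub : ∀ A B : Alg L, IsRFSI K B → Nonempty (A.carrier ↪[L] B.carrier) →
      (∃ x y : A.carrier, x ≠ y) → IsRFSI K A)
    {P C : Alg L} (hP : P ∈ K) (hC : IsRFSI K C) (g : P.carrier →[L] C.carrier)
    {π₁ π₂ : P.carrier → P.carrier → Prop} (h₁ : IsRelCong K P π₁) (h₂ : IsRelCong K P π₂)
    (h12 : ∀ x y, π₁ x y → π₂ x y → x = y) :
    (∀ x y, π₁ x y → g x = g y) ∨ (∀ x y, π₂ x y → g x = g y) := by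
  obtain ⟨-, hS, hPr, hU⟩ := hK
  by_cases htriv : ∀ x y, g x = g y
  · exact Or.inl fun x y _ => htriv x y
  push Not at htriv
  let κ : P.carrier → P.carrier → Prop := fun x y => g x = g y
  have hκ : IsRelCong K P κ := relCong_ker hS hC.1 g
  have hcong : IsCongruenceOn P κ := ker_cong g
  have hRF : IsRFSI K (Alg.quot P κ hcong.1) := by
    refine hsub _ C hC ?_ ?_
    · obtain ⟨m, hm⟩ := exists_lift (quotHom P κ hcong) (quotHom_surj _) g
        (fun x y h => (quotHom_eq hcong x y).1 h)
      refine ⟨embOfInj m ?_⟩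
      intro x y hxy
      obtain ⟨x, rfl⟩ := quotHom_surj hcong x
      obtain ⟨y, rfl⟩ := quotHom_surj hcong y
      rw [hm, hm] at hxy
      exact (quotHom_eq hcong x y).2 hxy
    · obtain ⟨x, y, hxy⟩ := htriv
      exact ⟨quotHom P κ hcong x, quotHom P κ hcong y, fun h => hxy ((quotHom_eq hcong x y).1 h)⟩
  -- the joins with the kernel
  have hJ₁ := relCong_join hS hPr κ π₁
  have hJ₂ := relCong_join hS hPr κ π₂
  have hle : ∀ x y, relCongJoin K P κ π₁ x y → relCongJoin K P κ π₂ x y → κ x y := by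
    intro x y hx hy
    have := (hRCD P hP _ _ _ hJ₁ hκ h₂ x y).1 ⟨hx, hy⟩
    refine this κ hκ (fun a b h => h.2) ?_
    rintro a b ⟨ha, hb⟩
    have := (hRCD P hP _ _ _ h₂ hκ h₁ a b).1 ⟨hb, ha⟩
    refine this κ hκ (fun a b h => h.2) ?_
    rintro a b ⟨ha, hb⟩
    rw [h12 a b hb ha]
  let J : ULift.{u} Bool → P.carrier → P.carrier → Prop := fun i =>
    if i.down then relCongJoin K P κ π₁ else relCongJoin K P κ π₂
  have hJ : ∀ i, IsRelCong K P (J i) := by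
    rintro ⟨_ | _⟩
    · simpa [J] using hJ₂
    · simpa [J] using hJ₁
  have hκJ : ∀ i x y, κ x y → J i x y := by
    rintro ⟨_ | _⟩ x y hxy
    · simp only [J]
      exact fun ρ _ h _ => h _ _ hxy
    · simp only [J]
      exact fun ρ _ h _ => h _ _ hxy
  choose hJc hJm using hJ
  choose m hm using fun i => exists_lift (quotHom P κ hcong) (quotHom_surj _)
    (quotHom P (J i) (hJc i)) (fun x y h => (quotHom_eq _ x y).2
      (hκJ i x y ((quotHom_eq hcong x y).1 h)))
  let H : (Alg.quot P κ hcong.1).carrier →[L]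
      (Alg.pi fun i => Alg.quot P (J i) (hJc i).1).carrier :=
    mkHom (N := (Alg.pi fun i => Alg.quot P (J i) (hJc i).1).carrier) (fun x i => m i x) (by
      intro n s x
      funext i
      exact hom_funMap (m i) s x)
  have hH : Function.Injective H := by
    intro x y hxy
    obtain ⟨x, rfl⟩ := quotHom_surj hcong x
    obtain ⟨y, rfl⟩ := quotHom_surj hcong y
    have hi : ∀ i, J i x y := by
      intro i
      have := congrFun hxy i
      change m i _ = m i _ at this
      rw [hm, hm] at this
      exact (quotHom_eq _ x y).1 this
    refine (quotHom_eq hcong x y).2 (hle x y ?_ ?_)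
    · simpa [J] using hi ⟨true⟩
    · simpa [J] using hi ⟨false⟩
  obtain ⟨i, hi⟩ := hRF.2 (ULift.{u} Bool) inferInstance _ hJm (embOfInj H hH) (by
    intro i y
    obtain ⟨y, rfl⟩ := quotHom_surj (hJc i) y
    exact ⟨quotHom P κ hcong y, hm i y⟩)
  have hfin : ∀ x y, J i x y → g x = g y := by
    intro x y hxy
    refine (quotHom_eq hcong x y).1 (hi.1 ?_)
    show m i _ = m i _
    rw [hm, hm]
    exact (quotHom_eq _ x y).2 hxy
  rcases i with ⟨_ | _⟩
  · right
    intro x y hxy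
    apply hfin
    simp only [J]
    exact fun ρ _ _ h => h _ _ hxy
  · left
    intro x y hxy
    apply hfin
    simp only [J]
    exact fun ρ _ _ h => h _ _ hxy

/-- The core consequence of strong epimorphism surjectivity. -/
theorem core [L.IsAlgebraic] {K : Set (Alg L)} (hK : IsQuasivariety K)
    (hRCD : RelCongDistributive K)
    (hsub : ∀ A B : Alg L, IsRFSI K B → Nonempty (A.carrier ↪[L] B.carrier) →
      (∃ x y : A.carrier, x ≠ y) → IsRFSI K A)
    (hSES : StrongES K) {A X Y : Alg L} (hA : A ∈ K) (hX : X ∈ K) (hY : Y ∈ K)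
    (p : A.carrier →[L] X.carrier) (q : A.carrier →[L] Y.carrier) (a b : A.carrier)
    (H : ∀ C : Alg L, C ∈ K → ∀ (g : X.carrier →[L] C.carrier) (h : Y.carrier →[L] C.carrier),
      (∀ z, g (p z) = h (q z)) → g (p a) = g (p b)) :
    ∃ c, p c = p a ∧ q c = q b := by
  have hS := hK.2.1
  have hPK : Alg.prod X Y ∈ K := prod_mem hS hK.2.2.1 hX hY
  by_contra hno
  push Not at hno
  let u : (Alg.prod X Y).carrier := (p a, q b)
  obtain ⟨D, hD, g, h, hgh, hne⟩ := hSES A (Alg.prod X Y) hA hPK (pairHom p q) u (by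
    rintro ⟨c, hc⟩
    exact hno c (congrArg Prod.fst hc) (congrArg Prod.snd hc))
  obtain ⟨C, hC, r, hr⟩ := exists_rfsi hK hD hne
  have hdich : ∀ k : (Alg.prod X Y).carrier →[L] C.carrier,
      (∀ s t : (Alg.prod X Y).carrier, s.1 = t.1 → k s = k t) ∨
      (∀ s t : (Alg.prod X Y).carrier, s.2 = t.2 → k s = k t) := fun k =>
    prime_ker hK hRCD hsub hPK hC k (relCong_ker hS hX (fstHom X Y))
      (relCong_ker hS hY (sndHom X Y)) (fun s t h1 h2 => Prod.ext h1 h2)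
  -- the mixed case
  have mixed : ∀ g h : (Alg.prod X Y).carrier →[L] C.carrier,
      (∀ z, g (p z, q z) = h (p z, q z)) →
      (∀ s t : (Alg.prod X Y).carrier, s.1 = t.1 → g s = g t) →
      (∀ s t : (Alg.prod X Y).carrier, s.2 = t.2 → h s = h t) → g u = h u := by
    intro g h hgh hg hh
    obtain ⟨g', hg'⟩ := exists_lift (fstHom X Y) (fun x => ⟨(x, q a), rfl⟩) g hg
    obtain ⟨h', hh'⟩ := exists_lift (sndHom X Y) (fun y => ⟨(p a, y), rfl⟩) h hh
    have e1 : ∀ x y, g (x, y) = g' x := fun x y => (hg' (x, y)).symm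
    have e2 : ∀ x y, h (x, y) = h' y := fun x y => (hh' (x, y)).symm
    have hz : ∀ z, g' (p z) = h' (q z) := by
      intro z
      rw [← e1 _ (q z), hgh, e2]
    have := H C hC.1 g' h' hz
    show g (p a, q b) = h (p a, q b)
    rw [e1, e2, this, hz]
  have hgh' : ∀ z, r.comp g (p z, q z) = r.comp h (p z, q z) := fun z => congrArg r (hgh z)
  apply hr
  show r.comp g u = r.comp h u
  rcases hdich (r.comp g) with hg | hg <;> rcases hdich (r.comp h) with hh | hh
  · rw [hg u (p a, q a) rfl, hh u (p a, q a) rfl, hgh']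
  · exact mixed _ _ hgh' hg hh
  · exact (mixed _ _ (fun z => (hgh' z).symm) hh hg).symm
  · rw [hg u (p b, q b) rfl, hh u (p b, q b) rfl, hgh']

/-- Relative congruences permute, and their join is their composition. -/
theorem relPerm [L.IsAlgebraic] {K : Set (Alg L)} (hK : IsQuasivariety K)
    (hRCD : RelCongDistributive K)
    (hsub : ∀ A B : Alg L, IsRFSI K B → Nonempty (A.carrier ↪[L] B.carrier) →
      (∃ x y : A.carrier, x ≠ y) → IsRFSI K A)
    (hSES : StrongES K) {A : Alg L} (hA : A ∈ K) {θ φ : A.carrier → A.carrier → Prop}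
    (hθ : IsRelCong K A θ) (hφ : IsRelCong K A φ) {a b : A.carrier}
    (hab : relCongJoin K A θ φ a b) : ∃ c, θ a c ∧ φ c b := by
  have hS := hK.2.1
  obtain ⟨X, hX, p, hp⟩ := (relCong_iff hS).1 hθ
  obtain ⟨Y, hY, q, hq⟩ := (relCong_iff hS).1 hφ
  obtain ⟨c, h1, h2⟩ := core hK hRCD hsub hSES hA hX hY p q a b (by
    intro C hC g h hz
    refine hab (fun x y => g.comp p x = g.comp p y) (relCong_ker hS hC (g.comp p)) ?_ ?_
    · intro x y hxy
      exact congrArg g ((hp x y).1 hxy)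
    · intro x y hxy
      show g (p x) = g (p y)
      rw [hz, hz, (hq x y).1 hxy])
  exact ⟨c, (hp a c).2 h1.symm, (hq c b).2 h2⟩

/-- The class is closed under homomorphic images. -/
theorem homImg [L.IsAlgebraic] {K : Set (Alg L)} (hK : IsQuasivariety K)
    (hRCD : RelCongDistributive K)
    (hsub : ∀ A B : Alg L, IsRFSI K B → Nonempty (A.carrier ↪[L] B.carrier) →
      (∃ x y : A.carrier, x ≠ y) → IsRFSI K A)
    (hSES : StrongES K) : ClosedUnderHomImg K := by
  intro A B hA h hsurj
  have hS := hK.2.1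
  let T : L.Substructure (Alg.prod A A).carrier :=
    { carrier := { t | h t.1 = h t.2 }
      fun_mem := by
        intro n s x hx
        show h (Structure.funMap s fun j => (x j).1) = h (Structure.funMap s fun j => (x j).2)
        rw [hom_funMap, hom_funMap]
        congr 1
        funext i
        exact hx i }
  let TA : Alg L := ⟨T⟩
  have hTA : TA ∈ K := hS TA _ (prod_mem hS hK.2.2.1 hA hA) ⟨T.subtype⟩
  let p₁ : TA.carrier →[L] A.carrier := (fstHom A A).comp T.subtype.toHom
  let p₂ : TA.carrier →[L] A.carrier := (sndHom A A).comp T.subtype.toHom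
  have hr₁ := relCong_ker hS hA p₁
  have hr₂ := relCong_ker hS hA p₂
  obtain ⟨D, hD, j, hj⟩ := (relCong_iff hS).1 (relCong_join hS hK.2.2.1
    (fun x y => p₁ x = p₁ y) (fun x y => p₂ x = p₂ y))
  have hTprop : ∀ t : TA.carrier, h (p₁ t) = h (p₂ t) := fun t => t.2
  have hker : ∀ s t : TA.carrier, j s = j t ↔ h (p₁ s) = h (p₁ t) := by
    intro s t
    rw [← hj]
    constructor
    · intro hst
      obtain ⟨c, h1, h2⟩ := relPerm hK hRCD hsub hSES hTA hr₁ hr₂ hst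
      rw [hTprop t, ← h2, ← hTprop c, h1]
    · intro hst ρ hρ h1 h2
      let c : TA.carrier := ⟨(p₁ s, p₂ t), hst.trans (hTprop t)⟩
      exact hρ.1.1.trans (h1 s c rfl) (h2 c t rfl)
  let diag : A.carrier →[L] TA.carrier :=
    mkHom (N := TA.carrier) (fun a => (⟨(a, a), rfl⟩ : T)) (fun _ _ _ => rfl)
  obtain ⟨m, hm⟩ := exists_lift h hsurj (j.comp diag) (fun x y hxy => (hker _ _).2 hxy)
  refine mem_of_inj hS hD m ?_
  intro x y hxy
  obtain ⟨x, rfl⟩ := hsurj x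
  obtain ⟨y, rfl⟩ := hsurj y
  rw [hm, hm] at hxy
  exact (hker _ _).1 hxy

theorem statement_16_aux [L.IsAlgebraic] {K : Set (Alg L)} (hK : IsQuasivariety K)
    (hRCD : RelCongDistributive K)
    (hsub : ∀ A B : Alg L, IsRFSI K B → Nonempty (A.carrier ↪[L] B.carrier) →
      (∃ x y : A.carrier, x ≠ y) → IsRFSI K A)
    (hSES : StrongES K) :
    IsVariety K ∧ CongPermutableClass K ∧ CongDistributiveClass K ∧ HasCEP K := by
  have hH := homImg hK hRCD hsub hSES
  have hS := hK.2.1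
  have hrel : ∀ A : Alg L, A ∈ K → ∀ θ, IsCongruenceOn A θ ↔ IsRelCong K A θ := by
    intro A hA θ
    exact ⟨fun h => ⟨h, hH A _ hA (quotHom A θ h) (quotHom_surj h)⟩, fun h => h.1⟩
  have hjoin : ∀ A : Alg L, A ∈ K → ∀ θ φ, congJoin A θ φ = relCongJoin K A θ φ := by
    intro A hA θ φ
    funext x y
    simp only [congJoin, relCongJoin, hrel A hA]
  refine ⟨⟨hH, hS, hK.2.2.1⟩, ?_, ?_, ?_⟩
  · intro A hA
    have key : ∀ θ φ : A.carrier → A.carrier → Prop,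
        IsCongruenceOn A θ → IsCongruenceOn A φ → ∀ x y : A.carrier,
          (∃ z, θ x z ∧ φ z y) → ∃ z, φ x z ∧ θ z y := by
      rintro θ φ hθ hφ x y ⟨z, h1, h2⟩
      refine relPerm hK hRCD hsub hSES hA ((hrel A hA _).1 hφ) ((hrel A hA _).1 hθ) ?_
      intro ρ hρ k1 k2
      exact hρ.1.1.trans (k2 _ _ h1) (k1 _ _ h2)
    exact fun θ φ hθ hφ x y => ⟨key θ φ hθ hφ x y, key φ θ hφ hθ x y⟩
  · intro A hA θ φ ψ hθ hφ hψ x y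
    rw [hjoin A hA, hjoin A hA]
    exact hRCD A hA θ φ ψ ((hrel A hA _).1 hθ) ((hrel A hA _).1 hφ) ((hrel A hA _).1 hψ) x y
  · intro A B hA hB e θ hθ
    let R : B.carrier → B.carrier → Prop := fun x y => ∃ a b, θ a b ∧ x = e a ∧ y = e b
    refine ⟨congJoin B R R, ?_, ?_⟩
    · rw [hjoin B hB]
      exact (relCong_join hS hK.2.2.1 R R).1
    · intro x y
      constructor
      · intro hxy ρ _ h _
        exact h _ _ ⟨x, y, hxy, rfl, rfl⟩
      · intro hxy
        obtain ⟨c, h1, h2⟩ := core hK hRCD hsub hSES hA hB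
          ((hrel A hA θ).1 hθ).2 e.toHom (quotHom A θ hθ) x y (by
            intro C hC g h hz
            refine hxy (fun s t => g s = g t) (ker_cong g) ?_ ?_ <;>
            · rintro _ _ ⟨a, b, hab, rfl, rfl⟩
              have ha := hz a
              have hb := hz b
              rw [(quotHom_eq hθ a b).2 hab] at ha
              exact ha.trans hb.symm)
        have : c = x := e.injective h1
        subst this
        exact (quotHom_eq hθ _ _).1 h2

end Aux

/-- Let `K` be a relatively congruence distributive quasivariety whose class
of relatively finitely subdirectly irreducible members is closed under nontrivial subalgebras.
If `K` has the strong epimorphism surjectivity property, then `K` is an arithmetical variety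
with the congruence extension property. -/
theorem statement_16 {L : FirstOrder.Language.{u, u}} [L.IsAlgebraic]
    {K : Set (Alg L)} (hK : IsQuasivariety K) (hRCD : RelCongDistributive K)
    (hsub : ∀ A B : Alg L, IsRFSI K B → Nonempty (A.carrier ↪[L] B.carrier) →
      (∃ x y : A.carrier, x ≠ y) → IsRFSI K A)
    (hSES : StrongES K) :
    IsVariety K ∧ CongPermutableClass K ∧ CongDistributiveClass K ∧ HasCEP K := by
  exact statement_16_aux hK hRCD hsub hSES

end Impl
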